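/- Let p, q ≥ 1, let A_1,…,A_p, B_1,…,B_q be strictly positive and a_1,…,a_p, b_1,…,b_q be nonnegative reals, and set W(x) = ∏_{i=1}^p Γ(A_i x + a_i) / ∏_{j=1}^q Γ(B_j x + b_j). If W is logarithmically completely monotonic on (0,∞), then: (a) Σ_{j=1}^q B_j = Σ_{i=1}^p A_i; (b) ρ = ∏_{i=1}^p A_i^{A_i} · ∏_{j=1}^q B_j^{−B_j} ≤ 1; (c) Σ_{j=1}^q b_j − Σ_{i=1}^p a_i + (p − q)/2 ≥ 0; and (d) min_{1≤i≤p}(a_i/A_i) ≤ min_{1≤j≤q}(b_j/B_j). -/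

import Mathlib

open MeasureTheory

/-- A function `f` is completely monotonic on `(0,∞)` if it is infinitely
differentiable there and `(-1)^n f^(n)(x) ≥ 0` for all `n ≥ 0` and `x > 0`. -/
def CompletelyMonotonicOn (f : ℝ → ℝ) : Prop :=
  (∀ x > (0 : ℝ), ContDiffAt ℝ (⊤ : ℕ∞) f x) ∧
    ∀ (n : ℕ), ∀ x > (0 : ℝ), 0 ≤ (-1 : ℝ) ^ n * iteratedDeriv n f x

/-- A positive function `f` on `(0,∞)` is logarithmically completely monotonic
if `-(log f)'` is completely monotonic on `(0,∞)`. -/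
def LogCompletelyMonotonic (f : ℝ → ℝ) : Prop :=
  (∀ x > (0 : ℝ), 0 < f x) ∧
    CompletelyMonotonicOn (fun x => -deriv (fun y => Real.log (f y)) x)

/-!
Write `ψ` for the digamma function, so that `φ = -(log W)'` is
`φ(x) = ∑ⱼ Bⱼ ψ(Bⱼ x + bⱼ) - ∑ᵢ Aᵢ ψ(Aᵢ x + aᵢ)`. From `ψ(y) = log y - 1/(2y) + O(1/y²)` one gets
`φ(x) = D log x + L + M/x + o(1/x)` with `D = ∑ Bⱼ - ∑ Aᵢ`, `L = -log ρ` and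
`M = ∑ bⱼ - ∑ aᵢ + (p - q)/2`. A nonnegative decreasing function with such an expansion has `D = 0`,
`L ≥ 0` and `M ≥ 0`.

For the last claim, put `β = minⱼ bⱼ/Bⱼ` and suppose that `β < aᵢ/Aᵢ` for all `i`. Then `φ` extends
holomorphically to `Re z > -β`, and its Taylor series at points of `(0,∞)`, whose coefficients
alternate in sign, shows that it stays nonnegative on `(-β,∞)`. But `φ(x) → -∞` as `x ↓ -β`, since
`ψ(y) → -∞` as `y ↓ 0` in the term attaining the minimum while all other terms stay bounded above.
-/

open Filter Set Topology Asymptotics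
open scoped ComplexOrder

section RealPointsOfHolomorphicFunctions

variable {F : ℂ → ℂ} {g : ℝ → ℝ} {x : ℝ}

theorem deriv_apply_ofReal (hF : DifferentiableAt ℂ F x) (hFg : ∀ᶠ t : ℝ in 𝓝 x, F t = g t) :
    deriv F x = (deriv g x : ℝ) := by
  have hg : HasDerivAt g (deriv F x).re x :=
    hF.hasDerivAt.real_of_complex.congr_of_eventuallyEq <| hFg.mono fun t ht ↦ by simp [ht]
  have hFx : HasDerivAt (fun t : ℝ ↦ (g t : ℂ)) (deriv F x) x :=
    hF.hasDerivAt.comp_ofReal.congr_of_eventuallyEq <| hFg.mono fun t ht ↦ ht.symm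
  rw [hg.deriv]
  exact hFx.unique hg.ofReal_comp

theorem iteratedDeriv_apply_ofReal (hF : AnalyticAt ℂ F x) (hFg : ∀ᶠ t : ℝ in 𝓝 x, F t = g t)
    (n : ℕ) : iteratedDeriv n F x = (iteratedDeriv n g x : ℝ) := by
  induction n generalizing F g with
  | zero => simpa using hFg.self_of_nhds
  | succ n ih =>
    rw [iteratedDeriv_succ', iteratedDeriv_succ']
    refine ih hF.deriv ?_
    filter_upwards [hFg.eventually_nhds,
      Complex.continuous_ofReal.continuousAt.eventually hF.eventually_analyticAt] with t hFgt hFt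
    exact deriv_apply_ofReal hFt.differentiableAt hFgt

theorem apply_ofReal_nonneg_of_iteratedDeriv_alternating {c r : ℝ}
    (hF : DifferentiableOn ℂ F (Metric.ball c r)) (hFg : ∀ᶠ t : ℝ in 𝓝 c, F t = g t)
    (hg : ∀ n, 0 ≤ (-1) ^ n * iteratedDeriv n g c) (hx : x ∈ Ioc (c - r) c) : 0 ≤ F x := by
  have hr : 0 < r := by linarith [hx.1, hx.2]
  have hcF : AnalyticAt ℂ F c := hF.analyticAt (Metric.ball_mem_nhds _ hr)
  have hball : DifferentiableOn ℂ (fun z ↦ F (-z)) (Metric.ball (-c : ℂ) r) := by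
    refine hF.comp differentiable_neg.differentiableOn fun z hz ↦ ?_
    rwa [Metric.mem_ball, ← dist_neg_neg, neg_neg]
  have hder (n : ℕ) : 0 ≤ iteratedDeriv n (fun z ↦ F (-z)) (-c) := by
    rw [iteratedDeriv_comp_neg, neg_neg, iteratedDeriv_apply_ofReal hcF hFg, smul_eq_mul]
    exact_mod_cast hg n
  have hxc : (-c : ℂ) ≤ -x := neg_le_neg (Complex.real_le_real.2 hx.2)
  have hxr : (-x : ℂ) ∈ Metric.ball (-c : ℂ) r := by
    rw [Metric.mem_ball, dist_neg_neg, Complex.dist_of_im_eq (by simp), Complex.ofReal_re,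
      Complex.ofReal_re, Real.dist_eq, abs_of_nonpos (by linarith [hx.2])]
    linarith [hx.1]
  simpa only [neg_neg] using hball.nonneg_of_iteratedDeriv_nonneg hder hxc hxr

end RealPointsOfHolomorphicFunctions

namespace CompletelyMonotonicOn

variable {f g : ℝ → ℝ}

theorem nonneg (hf : CompletelyMonotonicOn f) {x : ℝ} (hx : 0 < x) : 0 ≤ f x := by
  simpa using hf.2 0 x hx

theorem antitoneOn (hf : CompletelyMonotonicOn f) : AntitoneOn f (Ioi 0) := by
  have hdiff (x : ℝ) (hx : 0 < x) : DifferentiableAt ℝ f x := (hf.1 x hx).differentiableAt (by simp)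
  refine antitoneOn_of_deriv_nonpos (convex_Ioi 0)
    (fun x hx ↦ (hdiff x hx).continuousAt.continuousWithinAt)
    (fun x hx ↦ (hdiff x (interior_subset hx)).differentiableWithinAt) fun x hx ↦ ?_
  simpa using hf.2 1 x (interior_subset hx)

theorem congr (hf : CompletelyMonotonicOn f) (hfg : EqOn f g (Ioi 0)) :
    CompletelyMonotonicOn g := by
  have hev (x : ℝ) (hx : 0 < x) : g =ᶠ[𝓝 x] f := (hfg.eventuallyEq_of_mem (Ioi_mem_nhds hx)).symm
  refine ⟨fun x hx ↦ (hf.1 x hx).congr_of_eventuallyEq (hev x hx), fun n x hx ↦ ?_⟩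
  rw [(hev x hx).iteratedDeriv_eq n]
  exact hf.2 n x hx

theorem nonneg_of_differentiableOn (hf : CompletelyMonotonicOn f) {F : ℂ → ℂ} {σ : ℝ}
    (hF : DifferentiableOn ℂ F {z | σ < z.re}) (hFf : ∀ x > (0 : ℝ), F x = f x) {x : ℝ}
    (hx : σ < x) : 0 ≤ F x := by
  have hc : 0 < |x| + 1 := by positivity
  have hball : Metric.ball ((|x| + 1 : ℝ) : ℂ) (|x| + 1 - σ) ⊆ {z | σ < z.re} := by
    intro z hz
    have hre := (Complex.abs_re_le_norm _).trans_lt (mem_ball_iff_norm.1 hz)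
    rw [Complex.sub_re, Complex.ofReal_re] at hre
    exact (by linarith [(abs_lt.1 hre).1] : σ < z.re)
  refine apply_ofReal_nonneg_of_iteratedDeriv_alternating (hF.mono hball)
    (eventually_of_mem (Ioi_mem_nhds hc) hFf) (fun n ↦ hf.2 n _ hc) ⟨by linarith, ?_⟩
  linarith [le_abs_self x]

end CompletelyMonotonicOn

section LogarithmicExpansion

variable {f : ℝ → ℝ} {D L M : ℝ}

theorem tendsto_zero_of_tendsto_id_mul (h : Tendsto (fun x ↦ x * f x) atTop (𝓝 M)) :
    Tendsto f atTop (𝓝 0) := by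
  have hinv := tendsto_inv_atTop_zero.mul h
  rw [zero_mul] at hinv
  refine hinv.congr' ?_
  filter_upwards [eventually_ne_atTop 0] with x hx using inv_mul_cancel_left₀ hx (f x)

theorem isBigO_one_of_nonneg_of_antitoneOn (hf₀ : ∀ x > 0, 0 ≤ f x) (hf : AntitoneOn f (Ioi 0)) :
    f =O[atTop] (1 : ℝ → ℝ) := by
  refine .of_bound (f 1) ?_
  filter_upwards [eventually_ge_atTop 1] with x hx
  have hx₀ : 0 < x := by linarith
  simpa [abs_of_nonneg (hf₀ x hx₀)] using hf (mem_Ioi.2 one_pos) hx₀ hx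

theorem eq_zero_of_isBigO_one_of_tendsto_sub_mul_log (hf : f =O[atTop] (1 : ℝ → ℝ))
    (h : Tendsto (fun x ↦ f x - D * Real.log x) atTop (𝓝 L)) : D = 0 := by
  by_contra hD
  have hDlog : (fun x ↦ D * Real.log x) =O[atTop] (1 : ℝ → ℝ) := by
    simpa using! hf.sub (h.isBigO_one ℝ)
  have hlog : Real.log =o[atTop] Real.log :=
    ((isBigO_const_mul_left_iff hD).1 hDlog).trans_isLittleO Real.isLittleO_const_log_atTop
  exact isLittleO_irrefl
    (Real.tendsto_log_atTop.eventually_ne_atTop 0).frequently hlog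

theorem log_coeff_eq_zero (hf₀ : ∀ x > 0, 0 ≤ f x) (hf : AntitoneOn f (Ioi 0))
    (h : Tendsto (fun x ↦ x * (f x - D * Real.log x - L)) atTop (𝓝 M)) : D = 0 := by
  refine eq_zero_of_isBigO_one_of_tendsto_sub_mul_log (L := L)
    (isBigO_one_of_nonneg_of_antitoneOn hf₀ hf) ?_
  simpa using (tendsto_zero_of_tendsto_id_mul h).add_const L

theorem const_coeff_nonneg (hf₀ : ∀ x > 0, 0 ≤ f x)
    (h : Tendsto (fun x ↦ x * (f x - L)) atTop (𝓝 M)) : 0 ≤ L :=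
  ge_of_tendsto (tendsto_sub_nhds_zero_iff.1 (tendsto_zero_of_tendsto_id_mul h))
    ((eventually_gt_atTop 0).mono hf₀)

theorem inv_coeff_nonneg (hf : AntitoneOn f (Ioi 0))
    (h : Tendsto (fun x ↦ x * (f x - L)) atTop (𝓝 M)) : 0 ≤ M := by
  have hlim := tendsto_sub_nhds_zero_iff.1 (tendsto_zero_of_tendsto_id_mul h)
  refine ge_of_tendsto h ?_
  filter_upwards [eventually_gt_atTop 0] with x hx
  have hLx : L ≤ f x := by
    refine le_of_tendsto hlim ?_
    filter_upwards [eventually_ge_atTop x] with y hy using hf hx (hx.trans_le hy) hy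
  exact mul_nonneg hx.le (sub_nonneg.2 hLx)

end LogarithmicExpansion

section Digamma

variable {y : ℝ}

/-- The digamma function `ψ = Γ'/Γ` of a real variable; Mathlib only has the complex one, with which
it agrees on `(0,∞)` by `digamma_ofReal`. -/
noncomputable def realDigamma (y : ℝ) : ℝ := logDeriv Real.Gamma y

theorem differentiableAt_Gamma_of_pos (hy : 0 < y) : DifferentiableAt ℝ Real.Gamma y :=
  Real.differentiableOn_Gamma_Ioi.differentiableAt (Ioi_mem_nhds hy)

theorem differentiableAt_Gamma_of_re_pos {z : ℂ} (hz : 0 < z.re) :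
    DifferentiableAt ℂ Complex.Gamma z := by
  refine Complex.differentiableAt_Gamma z fun m hm ↦ hz.not_ge ?_
  simp [hm]

theorem differentiableAt_digamma_of_re_pos {z : ℂ} (hz : 0 < z.re) :
    DifferentiableAt ℂ Complex.digamma z := by
  have hopen : IsOpen {w : ℂ | 0 < w.re} := isOpen_lt continuous_const Complex.continuous_re
  have hΓ : DifferentiableOn ℂ Complex.Gamma {w | 0 < w.re} := fun w hw ↦
    (differentiableAt_Gamma_of_re_pos hw).differentiableWithinAt
  exact ((hΓ.deriv hopen).differentiableAt (hopen.mem_nhds hz)).div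
    (differentiableAt_Gamma_of_re_pos hz) (Complex.Gamma_ne_zero_of_re_pos hz)

theorem digamma_ofReal (hy : 0 < y) : Complex.digamma y = realDigamma y := by
  have hderiv : deriv Complex.Gamma y = (deriv Real.Gamma y : ℝ) :=
    deriv_apply_ofReal (differentiableAt_Gamma_of_re_pos (by simpa using hy))
      (.of_forall Complex.Gamma_ofReal)
  rw [Complex.digamma_def, realDigamma, logDeriv_apply, logDeriv_apply, hderiv,
    Complex.Gamma_ofReal, Complex.ofReal_div]

theorem realDigamma_add_one (hy : 0 < y) : realDigamma (y + 1) = realDigamma y + 1 / y := by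
  have hpole (m : ℕ) : (y : ℂ) ≠ -m := fun h ↦ by
    have : y = -m := by exact_mod_cast h
    linarith [m.cast_nonneg (α := ℝ)]
  have hC := Complex.digamma_apply_add_one y hpole
  rw [digamma_ofReal hy, ← Complex.ofReal_one, ← Complex.ofReal_add,
    digamma_ofReal (by positivity)] at hC
  rw [one_div]
  exact_mod_cast hC

theorem hasDerivAt_log_Gamma (hy : 0 < y) :
    HasDerivAt (Real.log ∘ Real.Gamma) (realDigamma y) y :=
  (differentiableAt_Gamma_of_pos hy).hasDerivAt.log (Real.Gamma_pos_of_pos hy).ne'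

theorem slope_log_Gamma_add_one (hy : 0 < y) :
    slope (Real.log ∘ Real.Gamma) y (y + 1) = Real.log y := by
  rw [slope_def_field, Function.comp_apply, Function.comp_apply, Real.Gamma_add_one hy.ne',
    Real.log_mul hy.ne' (Real.Gamma_pos_of_pos hy).ne']
  ring

theorem monotoneOn_realDigamma : MonotoneOn realDigamma (Ioi 0) := by
  have hmono : MonotoneOn (deriv (Real.log ∘ Real.Gamma)) (Ioi 0) :=
    Real.convexOn_log_Gamma.monotoneOn_deriv fun y hy ↦
      (hasDerivAt_log_Gamma hy).differentiableAt
  exact hmono.congr fun y hy ↦ (hasDerivAt_log_Gamma hy).deriv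

theorem realDigamma_le_log (hy : 0 < y) : realDigamma y ≤ Real.log y := by
  rw [← slope_log_Gamma_add_one hy]
  exact Real.convexOn_log_Gamma.le_slope_of_hasDerivAt hy (add_pos hy one_pos) (lt_add_one y)
    (hasDerivAt_log_Gamma hy)

theorem log_sub_one_div_le_realDigamma (hy : 0 < y) : Real.log y - 1 / y ≤ realDigamma y := by
  have hy₁ : 0 < y + 1 := by positivity
  rw [sub_le_iff_le_add, ← realDigamma_add_one hy, ← slope_log_Gamma_add_one hy]
  exact Real.convexOn_log_Gamma.slope_le_of_hasDerivAt hy hy₁ (lt_add_one y)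
    (hasDerivAt_log_Gamma hy₁)

theorem tendsto_realDigamma_nhdsGT_zero : Tendsto realDigamma (𝓝[>] 0) atBot :=
  tendsto_atBot_mono' _ (eventually_mem_nhdsWithin.mono fun _ hy ↦ realDigamma_le_log hy)
    Real.tendsto_log_nhdsGT_zero

end Digamma

section DigammaAsymptotics

variable {y : ℝ}

/-- The remainder in the expansion `ψ(y) = log y - 1/(2y) + ⋯` of the digamma function. -/
noncomputable def digammaRemainder (y : ℝ) : ℝ := realDigamma y - Real.log y + 1 / (2 * y)

theorem abs_digammaRemainder_le (hy : 0 < y) : |digammaRemainder y| ≤ 1 / y := by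
  have hhalf : 1 / (2 * y) = 1 / y / 2 := by field_simp
  have hinv : 0 < 1 / y := by positivity
  rw [digammaRemainder, abs_le]
  constructor <;> linarith [realDigamma_le_log hy, log_sub_one_div_le_realDigamma hy]

theorem tendsto_digammaRemainder : Tendsto digammaRemainder atTop (𝓝 0) := by
  refine squeeze_zero_norm' ((eventually_gt_atTop 0).mono fun y hy ↦ abs_digammaRemainder_le hy) ?_
  exact tendsto_const_nhds.div_atTop tendsto_id

theorem digammaRemainder_add_one_sub (hy : 0 < y) :
    digammaRemainder (y + 1) - digammaRemainder y =
      1 / y + 1 / (2 * (y + 1)) - 1 / (2 * y) - Real.log (1 + 1 / y) := by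
  have hlog : Real.log (y + 1) = Real.log y + Real.log (1 + 1 / y) := by
    rw [← Real.log_mul hy.ne' (by positivity), mul_one_add, mul_one_div_cancel hy.ne']
  rw [digammaRemainder, digammaRemainder, realDigamma_add_one hy, hlog]
  ring

theorem digammaRemainder_le_add_one (hy : 0 < y) :
    digammaRemainder y ≤ digammaRemainder (y + 1) := by
  -- `log u ≤ sinh (log u) = (u - u⁻¹) / 2` at `u = 1 + 1 / y`
  have hu : 0 < 1 + 1 / y := by positivity
  have hsinh : Real.log (1 + 1 / y) ≤ Real.sinh (Real.log (1 + 1 / y)) :=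
    Real.self_le_sinh_iff.2 (Real.log_nonneg (le_add_of_nonneg_right (by positivity)))
  have hrat : ((1 + 1 / y) - (1 + 1 / y)⁻¹) / 2 = 1 / y + 1 / (2 * (y + 1)) - 1 / (2 * y) := by
    field_simp
    ring
  rw [Real.sinh_log hu, hrat] at hsinh
  linarith [digammaRemainder_add_one_sub hy]

theorem digammaRemainder_add_one_add_inv_sq_le (hy : 0 < y) :
    digammaRemainder (y + 1) + 1 / (y + 1) ^ 2 ≤ digammaRemainder y + 1 / y ^ 2 := by
  have hlog : 2 * (1 / y) / (1 / y + 2) ≤ Real.log (1 + 1 / y) :=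
    Real.le_log_one_add_of_nonneg (by positivity)
  have hrat : 2 * (1 / y) / (1 / y + 2) -
      (1 / y + 1 / (2 * (y + 1)) - 1 / (2 * y) + 1 / (y + 1) ^ 2 - 1 / y ^ 2) =
      (7 * y ^ 2 + 7 * y + 2) / (2 * y ^ 2 * (y + 1) ^ 2 * (2 * y + 1)) := by
    field_simp
    ring
  have hpos : 0 ≤ (7 * y ^ 2 + 7 * y + 2) / (2 * y ^ 2 * (y + 1) ^ 2 * (2 * y + 1)) := by
    positivity
  linarith [digammaRemainder_add_one_sub hy]

theorem le_of_forall_le_add_one_of_tendsto {f : ℝ → ℝ} {l : ℝ}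
    (hstep : ∀ t > 0, f t ≤ f (t + 1)) (hlim : Tendsto f atTop (𝓝 l)) (hy : 0 < y) : f y ≤ l := by
  have hmono : Monotone fun n : ℕ ↦ f (y + n) := monotone_nat_of_le_succ fun n ↦ by
    simpa only [Nat.cast_add_one, add_assoc] using hstep (y + n) (by positivity)
  have hnat : Tendsto (fun n : ℕ ↦ y + n) atTop atTop :=
    tendsto_atTop_add_const_left _ _ tendsto_natCast_atTop_atTop
  simpa using hmono.ge_of_tendsto (hlim.comp hnat) 0

theorem digammaRemainder_nonpos (hy : 0 < y) : digammaRemainder y ≤ 0 :=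
  le_of_forall_le_add_one_of_tendsto (fun _ ↦ digammaRemainder_le_add_one)
    tendsto_digammaRemainder hy

theorem neg_inv_sq_le_digammaRemainder (hy : 0 < y) : -(1 / y ^ 2) ≤ digammaRemainder y := by
  have hsq : Tendsto (fun t : ℝ ↦ 1 / t ^ 2) atTop (𝓝 0) := by
    simpa using tendsto_pow_neg_atTop (𝕜 := ℝ) two_ne_zero
  have hlim : Tendsto (fun t ↦ -(digammaRemainder t + 1 / t ^ 2)) atTop (𝓝 0) := by
    simpa using (tendsto_digammaRemainder.add hsq).neg
  have hle := le_of_forall_le_add_one_of_tendsto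
    (fun t ht ↦ neg_le_neg (digammaRemainder_add_one_add_inv_sq_le ht)) hlim hy
  linarith

theorem tendsto_mul_digammaRemainder :
    Tendsto (fun y ↦ y * digammaRemainder y) atTop (𝓝 0) := by
  refine squeeze_zero_norm' ?_ tendsto_inv_atTop_zero
  filter_upwards [eventually_gt_atTop 0] with y hy
  calc ‖y * digammaRemainder y‖ = y * -digammaRemainder y := by
        rw [norm_mul, Real.norm_of_nonneg hy.le, Real.norm_of_nonpos (digammaRemainder_nonpos hy)]
    _ ≤ y * (1 / y ^ 2) := by
        gcongr
        linarith [neg_inv_sq_le_digammaRemainder hy]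
    _ = y⁻¹ := by field_simp

theorem tendsto_mul_realDigamma_sub_log :
    Tendsto (fun y ↦ y * (realDigamma y - Real.log y)) atTop (𝓝 (-(1 / 2))) := by
  have hlim := tendsto_mul_digammaRemainder.sub_const (1 / 2)
  rw [zero_sub] at hlim
  refine hlim.congr' ?_
  filter_upwards [eventually_ne_atTop 0] with y hy
  rw [digammaRemainder]
  field_simp
  ring

theorem tendsto_mul_realDigamma_affine_sub {B : ℝ} (hB : 0 < B) (b : ℝ) :
    Tendsto (fun x ↦ x * (B * realDigamma (B * x + b) - B * Real.log x - B * Real.log B))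
      atTop (𝓝 (b - 1 / 2)) := by
  have haff : Tendsto (fun x ↦ B * x + b) atTop atTop :=
    tendsto_atTop_add_const_right _ _ (tendsto_id.const_mul_atTop hB)
  have hratio : Tendsto (fun x ↦ 1 - b * (B * x + b)⁻¹) atTop (𝓝 1) := by
    simpa using ((tendsto_inv_atTop_zero.comp haff).const_mul b).const_sub 1
  have hlog : Tendsto (fun x ↦ B * (x * Real.log (1 + b / B / x))) atTop (𝓝 b) := by
    simpa [mul_div_cancel₀ b hB.ne'] using
      (Real.tendsto_mul_log_one_add_div_atTop (b / B)).const_mul B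
  have hsum := hlog.add (hratio.mul (tendsto_mul_realDigamma_sub_log.comp haff))
  rw [one_mul, ← sub_eq_add_neg] at hsum
  refine hsum.congr' ?_
  filter_upwards [eventually_gt_atTop 0, haff.eventually_gt_atTop 0] with x hx hBx
  have hsplit : Real.log (B * x + b) = Real.log B + Real.log x + Real.log (1 + b / B / x) := by
    have hfactor : B * x + b = B * x * (1 + b / B / x) := by field_simp
    have hpos : 0 < 1 + b / B / x := pos_of_mul_pos_right (hfactor ▸ hBx) (by positivity)
    rw [hfactor, Real.log_mul (by positivity) hpos.ne', Real.log_mul hB.ne' hx.ne']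
  have hcancel : (1 - b * (B * x + b)⁻¹) * (B * x + b) = B * x := by
    field_simp
    ring
  rw [Function.comp_apply, ← mul_assoc (1 - _), hcancel, hsplit]
  ring

end DigammaAsymptotics

section GammaQuotient

variable {ι κ : Type*} [Fintype ι] [Fintype κ] {A a : ι → ℝ} {B b : κ → ℝ} {x σ : ℝ}

/-- The quotient of products of gamma functions denoted `W` in the paper. -/
noncomputable def gammaQuotient (A a : ι → ℝ) (B b : κ → ℝ) (x : ℝ) : ℝ :=
  (∏ i, Real.Gamma (A i * x + a i)) / ∏ j, Real.Gamma (B j * x + b j)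

/-- The combination of digamma values that equals `-(log W)'` where all arguments of `Γ` in `W` are
positive, by `neg_deriv_log_gammaQuotient`. -/
noncomputable def digammaDifference (A a : ι → ℝ) (B b : κ → ℝ) (x : ℝ) : ℝ :=
  ∑ j, B j * realDigamma (B j * x + b j) - ∑ i, A i * realDigamma (A i * x + a i)

theorem hasDerivAt_log_Gamma_affine {c d : ℝ} (h : 0 < c * x + d) :
    HasDerivAt (fun t ↦ Real.log (Real.Gamma (c * t + d))) (c * realDigamma (c * x + d)) x := by
  have haff : HasDerivAt (fun t ↦ c * t + d) c x := by
    simpa using ((hasDerivAt_id x).const_mul c).add_const d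
  simpa only [mul_comm c (realDigamma _)] using! (hasDerivAt_log_Gamma h).comp x haff

theorem log_gammaQuotient (hA : ∀ i, 0 < A i * x + a i) (hB : ∀ j, 0 < B j * x + b j) :
    Real.log (gammaQuotient A a B b x) =
      ∑ i, Real.log (Real.Gamma (A i * x + a i)) - ∑ j, Real.log (Real.Gamma (B j * x + b j)) := by
  have hΓA (i : ι) := (Real.Gamma_pos_of_pos (hA i)).ne'
  have hΓB (j : κ) := (Real.Gamma_pos_of_pos (hB j)).ne'
  rw [gammaQuotient, Real.log_div (Finset.prod_ne_zero_iff.2 fun i _ ↦ hΓA i)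
    (Finset.prod_ne_zero_iff.2 fun j _ ↦ hΓB j), Real.log_prod fun i _ ↦ hΓA i,
    Real.log_prod fun j _ ↦ hΓB j]

theorem eventually_forall_affine_pos {ι : Type*} [Finite ι] {c d : ι → ℝ}
    (h : ∀ i, 0 < c i * x + d i) : ∀ᶠ t in 𝓝 x, ∀ i, 0 < c i * t + d i :=
  eventually_all.2 fun i ↦
    (by fun_prop : ContinuousAt (fun t ↦ c i * t + d i) x).eventually (lt_mem_nhds (h i))

theorem neg_deriv_log_gammaQuotient (hA : ∀ i, 0 < A i * x + a i)
    (hB : ∀ j, 0 < B j * x + b j) :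
    -deriv (fun t ↦ Real.log (gammaQuotient A a B b t)) x = digammaDifference A a B b x := by
  have hderiv := (HasDerivAt.fun_sum fun i (_ : i ∈ Finset.univ) ↦
    hasDerivAt_log_Gamma_affine (hA i)).fun_sub
      (HasDerivAt.fun_sum fun j (_ : j ∈ Finset.univ) ↦ hasDerivAt_log_Gamma_affine (hB j))
  have hlog : (fun t ↦ Real.log (gammaQuotient A a B b t)) =ᶠ[𝓝 x] fun t ↦
      ∑ i, Real.log (Real.Gamma (A i * t + a i)) - ∑ j, Real.log (Real.Gamma (B j * t + b j)) := by
    filter_upwards [eventually_forall_affine_pos hA, eventually_forall_affine_pos hB]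
      with t hAt hBt using log_gammaQuotient hAt hBt
  rw [(hderiv.congr_of_eventuallyEq hlog).deriv, neg_sub, digammaDifference]

theorem completelyMonotonicOn_digammaDifference (hA : ∀ i, 0 < A i) (ha : ∀ i, 0 ≤ a i)
    (hB : ∀ j, 0 < B j) (hb : ∀ j, 0 ≤ b j)
    (hW : LogCompletelyMonotonic (gammaQuotient A a B b)) :
    CompletelyMonotonicOn (digammaDifference A a B b) :=
  hW.2.congr fun _ hx ↦ neg_deriv_log_gammaQuotient
    (fun i ↦ add_pos_of_pos_of_nonneg (mul_pos (hA i) hx) (ha i))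
    fun j ↦ add_pos_of_pos_of_nonneg (mul_pos (hB j) hx) (hb j)

theorem tendsto_mul_digammaDifference_sub (hA : ∀ i, 0 < A i) (hB : ∀ j, 0 < B j)
    (a : ι → ℝ) (b : κ → ℝ) :
    Tendsto (fun x ↦ x * (digammaDifference A a B b x - (∑ j, B j - ∑ i, A i) * Real.log x -
        (∑ j, B j * Real.log (B j) - ∑ i, A i * Real.log (A i)))) atTop
      (𝓝 (∑ j, b j - ∑ i, a i + ((Fintype.card ι : ℝ) - Fintype.card κ) / 2)) := by
  have hlim := (tendsto_finsetSum Finset.univ fun j _ ↦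
    tendsto_mul_realDigamma_affine_sub (hB j) (b j)).sub
      (tendsto_finsetSum Finset.univ fun i _ ↦ tendsto_mul_realDigamma_affine_sub (hA i) (a i))
  have hM : ∑ j, (b j - 1 / 2) - ∑ i, (a i - 1 / 2) =
      ∑ j, b j - ∑ i, a i + ((Fintype.card ι : ℝ) - Fintype.card κ) / 2 := by
    simp only [Finset.sum_sub_distrib, Finset.sum_const, Finset.card_univ, nsmul_eq_mul]
    ring
  rw [hM] at hlim
  refine hlim.congr fun x ↦ ?_
  simp only [digammaDifference, ← Finset.mul_sum, Finset.sum_sub_distrib, ← Finset.sum_mul]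
  ring

theorem prod_rpow_self_mul_prod_rpow_neg_self (hA : ∀ i, 0 < A i) (hB : ∀ j, 0 < B j) :
    (∏ i, A i ^ A i) * ∏ j, B j ^ (-B j) =
      Real.exp (-(∑ j, B j * Real.log (B j) - ∑ i, A i * Real.log (A i))) := by
  have hAexp (i : ι) : A i ^ A i = Real.exp (A i * Real.log (A i)) := by
    rw [Real.rpow_def_of_pos (hA i), mul_comm]
  have hBexp (j : κ) : B j ^ (-B j) = Real.exp (-(B j * Real.log (B j))) := by
    rw [Real.rpow_def_of_pos (hB j), mul_neg, mul_comm]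
  simp only [hAexp, hBexp]
  rw [← Real.exp_sum, ← Real.exp_sum, ← Real.exp_add, Finset.sum_neg_distrib, neg_sub,
    sub_eq_add_neg]

theorem differentiableAt_mul_digamma_affine {c d : ℝ} {z : ℂ} (h : 0 < c * z.re + d) :
    DifferentiableAt ℂ (fun w : ℂ ↦ c * Complex.digamma (c * w + d)) z := by
  have hψ : DifferentiableAt ℂ Complex.digamma (c * z + d) :=
    differentiableAt_digamma_of_re_pos (by simpa using h)
  exact (hψ.comp z (f := fun w : ℂ ↦ c * w + d) (by fun_prop)).const_mul _

theorem digammaDifference_nonneg_of_forall_gt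
    (hφ : CompletelyMonotonicOn (digammaDifference A a B b)) (hσ : σ ≤ 0)
    (hA : ∀ i, ∀ x > σ, 0 < A i * x + a i) (hB : ∀ j, ∀ x > σ, 0 < B j * x + b j) (hx : σ < x) :
    0 ≤ digammaDifference A a B b x := by
  let F : ℂ → ℂ := fun z ↦ ∑ j, (B j : ℂ) * Complex.digamma (B j * z + b j) -
    ∑ i, (A i : ℂ) * Complex.digamma (A i * z + a i)
  have hF : DifferentiableOn ℂ F {z | σ < z.re} := fun z hz ↦
    ((DifferentiableAt.fun_sum fun j _ ↦ differentiableAt_mul_digamma_affine (hB j _ hz)).sub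
      (DifferentiableAt.fun_sum fun i _ ↦
        differentiableAt_mul_digamma_affine (hA i _ hz))).differentiableWithinAt
  have hFφ (t : ℝ) (ht : σ < t) : F t = digammaDifference A a B b t := by
    simp only [F, digammaDifference, Complex.ofReal_sub, Complex.ofReal_sum, Complex.ofReal_mul,
      ← digamma_ofReal (hA _ t ht), ← digamma_ofReal (hB _ t ht), Complex.ofReal_add]
  have hnonneg := hφ.nonneg_of_differentiableOn hF (fun t ht ↦ hFφ t (hσ.trans_lt ht)) hx
  rwa [hFφ x hx, Complex.zero_le_real] at hnonneg

theorem tendsto_digammaDifference_nhdsGT (hA : ∀ i, 0 < A i) (hB : ∀ j, 0 < B j)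
    (hAσ : ∀ i, 0 < A i * σ + a i) (hBσ : ∀ j, 0 ≤ B j * σ + b j)
    (hzero : ∃ j, B j * σ + b j = 0) :
    Tendsto (digammaDifference A a B b) (𝓝[>] σ) atBot := by
  classical
  obtain ⟨k, hk⟩ := hzero
  have haff : Tendsto (fun x ↦ B k * x + b k) (𝓝[>] σ) (𝓝[>] 0) := by
    have hcont : ContinuousWithinAt (fun x ↦ B k * x + b k) (Ioi σ) σ := by fun_prop
    have hmaps : MapsTo (fun x ↦ B k * x + b k) (Ioi σ) (Ioi 0) := fun x hx ↦ by
      have : B k * σ < B k * x := mul_lt_mul_of_pos_left hx (hB k)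
      exact (by linarith : 0 < B k * x + b k)
    simpa only [hk] using hcont.tendsto_nhdsWithin hmaps
  have hbound := tendsto_atBot_add_const_right _
    (∑ j ∈ Finset.univ.erase k, B j * realDigamma (B j * (σ + 1) + b j) -
      ∑ i, A i * realDigamma (A i * σ + a i))
    ((tendsto_realDigamma_nhdsGT_zero.comp haff).const_mul_atBot (hB k))
  refine tendsto_atBot_mono' _ ?_ hbound
  filter_upwards [Ioo_mem_nhdsGT (lt_add_one σ)] with x ⟨hσx, hxσ⟩
  have hBj (j : κ) : B j * realDigamma (B j * x + b j) ≤
      B j * realDigamma (B j * (σ + 1) + b j) := by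
    have hlt : B j * σ < B j * x := mul_lt_mul_of_pos_left hσx (hB j)
    have hle : B j * x ≤ B j * (σ + 1) := mul_le_mul_of_nonneg_left hxσ.le (hB j).le
    refine mul_le_mul_of_nonneg_left (monotoneOn_realDigamma (mem_Ioi.2 ?_) (mem_Ioi.2 ?_) ?_)
      (hB j).le <;> linarith [hBσ j]
  have hAi (i : ι) : A i * realDigamma (A i * σ + a i) ≤ A i * realDigamma (A i * x + a i) := by
    have hlt : A i * σ < A i * x := mul_lt_mul_of_pos_left hσx (hA i)
    refine mul_le_mul_of_nonneg_left (monotoneOn_realDigamma (hAσ i) (mem_Ioi.2 ?_) ?_)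
      (hA i).le <;> linarith [hAσ i]
  rw [digammaDifference, ← Finset.add_sum_erase _ _ (Finset.mem_univ k), add_sub_assoc]
  exact add_le_add_right (sub_le_sub (Finset.sum_le_sum fun j _ ↦ hBj j)
    (Finset.sum_le_sum fun i _ ↦ hAi i)) _

theorem iInf_div_le_iInf_div [Nonempty κ] (hA : ∀ i, 0 < A i) (hB : ∀ j, 0 < B j)
    (hb : ∀ j, 0 ≤ b j) (hφ : CompletelyMonotonicOn (digammaDifference A a B b)) :
    ⨅ i, a i / A i ≤ ⨅ j, b j / B j := by
  by_contra! hlt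
  obtain ⟨k, hk⟩ := exists_eq_ciInf_of_finite (f := fun j ↦ b j / B j)
  set β := ⨅ j, b j / B j
  have hβ : -β ≤ 0 := neg_nonpos.2 (hk ▸ div_nonneg (hb k) (hB k).le)
  have hAβ (i : ι) : 0 < A i * -β + a i := by
    have hi : β < a i / A i := hlt.trans_le (ciInf_le (finite_range _).bddBelow i)
    linarith [(lt_div_iff₀' (hA i)).1 hi]
  have hBβ (j : κ) : 0 ≤ B j * -β + b j := by
    have hj : β ≤ b j / B j := ciInf_le (finite_range _).bddBelow j
    linarith [(le_div_iff₀' (hB j)).1 hj]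
  have hkβ : B k * -β + b k = 0 := by
    linarith [(div_eq_iff (hB k).ne').1 hk]
  have hnonneg (x : ℝ) (hx : -β < x) : 0 ≤ digammaDifference A a B b x :=
    digammaDifference_nonneg_of_forall_gt hφ hβ
      (fun i t ht ↦ (hAβ i).trans (by gcongr; exact hA i))
      (fun j t ht ↦ (hBβ j).trans_lt (by gcongr; exact hB j)) hx
  have hneg := (tendsto_digammaDifference_nhdsGT hA hB hAβ hBβ ⟨k, hkβ⟩).eventually_lt_atBot 0
  obtain ⟨x, hφx, hx⟩ := (hneg.and eventually_mem_nhdsWithin).exists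
  exact hφx.not_ge (hnonneg x hx)

end GammaQuotient

theorem stmt9_general {ι κ : Type*} [Fintype ι] [Fintype κ] [Nonempty κ]
    (A a : ι → ℝ) (B b : κ → ℝ) (hA : ∀ i, 0 < A i) (hB : ∀ j, 0 < B j)
    (ha : ∀ i, 0 ≤ a i) (hb : ∀ j, 0 ≤ b j)
    (hW : LogCompletelyMonotonic
      (fun x => (∏ i, Real.Gamma (A i * x + a i)) / ∏ j, Real.Gamma (B j * x + b j))) :
    (∑ j, B j = ∑ i, A i) ∧
      ((∏ i, A i ^ A i) * ∏ j, B j ^ (-B j) ≤ 1) ∧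
      (0 ≤ (∑ j, b j) - (∑ i, a i) + ((Fintype.card ι : ℝ) - (Fintype.card κ : ℝ)) / 2) ∧
      ((⨅ i, a i / A i) ≤ ⨅ j, b j / B j) := by
  have hφ := completelyMonotonicOn_digammaDifference hA ha hB hb hW
  have hφ₀ : ∀ x > 0, 0 ≤ digammaDifference A a B b x := fun _ ↦ hφ.nonneg
  have hexp := tendsto_mul_digammaDifference_sub hA hB a b
  have hD := log_coeff_eq_zero hφ₀ hφ.antitoneOn hexp
  simp only [hD, zero_mul, sub_zero] at hexp
  refine ⟨sub_eq_zero.1 hD, ?_, inv_coeff_nonneg hφ.antitoneOn hexp,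
    iInf_div_le_iInf_div hA hB hb hφ⟩
  rw [prod_rpow_self_mul_prod_rpow_neg_self hA hB, Real.exp_le_one_iff, neg_nonpos]
  exact const_coeff_nonneg hφ₀ hexp

theorem stmt9 (p q : ℕ) (hp : 1 ≤ p) (hq : 1 ≤ q)
    (A : Fin p → ℝ) (B : Fin q → ℝ) (a : Fin p → ℝ) (b : Fin q → ℝ)
    (hA : ∀ i, 0 < A i) (hB : ∀ j, 0 < B j)
    (ha : ∀ i, 0 ≤ a i) (hb : ∀ j, 0 ≤ b j)
    (hW : LogCompletelyMonotonic
      (fun x => (∏ i, Real.Gamma (A i * x + a i)) / ∏ j, Real.Gamma (B j * x + b j))) :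
    (∑ j, B j = ∑ i, A i) ∧
      ((∏ i, A i ^ A i) * ∏ j, B j ^ (-B j) ≤ 1) ∧
      (0 ≤ (∑ j, b j) - (∑ i, a i) + ((p : ℝ) - (q : ℝ)) / 2) ∧
      ((⨅ i, a i / A i) ≤ ⨅ j, b j / B j) := by
  have := Fin.pos_iff_nonempty.1 hq
  simpa only [Fintype.card_fin] using stmt9_general A a B b hA hB ha hb hW
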